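/- Let k be a commutative ring, n ≥ 1, and u ∈ Tuple(n). Let gr_u be the chain complex over k whose degree-m part is the free k-module on the set {b ∈ STuple(n,m) : p(b) = u}, with differential d_gr(B_0 | … | B_m) = Σ_{i=0}^{m-1} (-1)^{i+1} (B_0 | … | B_{i-1} | B_iB_{i+1} | B_{i+2} | … | B_m). Then gr_u is isomorphic as a chain complex to C_*(Cuts(u)), and in particular gr_u is exact: its homology vanishes in every degree. -/

import Mathlib

/-!
Concatenation forgets only where the blocks begin, so a splitting of `u` amounts to the set of
positions at which it is cut. The conditions on heads and tails say together that the entry at each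
block boundary is smaller than everything to its right, that is, that each cut is admissible.
Merging two neighbouring blocks deletes the cut between them: the differential of `gr_u` is, up to
sign, the face map of the augmented simplex on `Cuts(u)`, and rescaling by `(-1) ^ m` in degree `m`
absorbs the sign. The last position is always an admissible cut, so the simplex is nonempty, and the
cone on its smallest vertex contracts it.
-/

def IsSTuple (n m : ℕ) (B : Fin (m + 1) → List ℕ) : Prop :=
  (∀ i, B i ≠ []) ∧
  ((List.ofFn B).flatten.Perm (List.range (n + 1))) ∧
  (∀ i j : Fin (m + 1), i < j → (B i).headI < (B j).headI) ∧
  (∀ i : Fin (m + 1), ∀ x ∈ (B i).tail, (B i).headI < x)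

structure STuple (n m : ℕ) where
  B : Fin (m + 1) → List ℕ
  prop : IsSTuple n m B

def IsTuple (n : ℕ) (u : List ℕ) : Prop :=
  u.Perm (List.range (n + 1)) ∧ u.headI = 0

/-- The set of admissible cuts of `u`. -/
def Cuts (n : ℕ) (u : List ℕ) : Finset ℕ :=
  (Finset.Icc 1 n).filter (fun i => ∀ j ∈ Finset.Ioc i n, u.getD i 0 < u.getD j 0)

/-- Merging two consecutive blocks `Bᵢ` and `Bᵢ₊₁` into their concatenation. -/
def mergeAt {m : ℕ} (B : Fin (m + 2) → List ℕ) (i : Fin (m + 1)) : Fin (m + 1) → List ℕ :=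
  fun l => if l = i then B i.castSucc ++ B i.succ
    else if l < i then B l.castSucc else B l.succ

/-- Degree-`ℓ` part of the chain complex `C_*(E)` of a finite linearly ordered set. -/
abbrev SimplexChain (k : Type*) [CommRing k] (E : Type*) [Fintype E] [LinearOrder E]
    (ℓ : ℕ) : Type _ :=
  {s : Finset E // s.card = ℓ} →₀ k

/-- The differential of `C_*(E)`. -/
noncomputable def simplexD (k : Type*) [CommRing k] (E : Type*) [Fintype E] [LinearOrder E]
    (ℓ : ℕ) : SimplexChain k E (ℓ + 1) →ₗ[k] SimplexChain k E ℓ :=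
  Finsupp.lift (SimplexChain k E ℓ) k {s : Finset E // s.card = ℓ + 1}
    (fun s => ∑ e ∈ s.1.attach,
      ((-1 : ℤ) ^ ((s.1.filter (fun x => x < e.1)).card)) •
        Finsupp.single
          ⟨s.1.erase e.1, by simp [Finset.card_erase_of_mem e.2, s.2]⟩ (1 : k))

/-- Degree-`m` part of `gr_u`: the free `k`-module on the `m`-split `(n+1)`-tuples `b`
with `p(b) = u`. -/
abbrev GrU (k : Type*) [CommRing k] (n : ℕ) (u : List ℕ) (m : ℕ) : Type _ :=
  {b : STuple n m // (List.ofFn b.B).flatten = u} →₀ k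

open Classical in
/-- The basis element of `GrU` attached to a family of blocks, when it is a split tuple
with projection `u` (and `0` otherwise). -/
noncomputable def toGr (k : Type*) [CommRing k] (n : ℕ) (u : List ℕ) (m : ℕ)
    (B : Fin (m + 1) → List ℕ) : GrU k n u m :=
  if h : IsSTuple n m B ∧ (List.ofFn B).flatten = u then
    Finsupp.single ⟨⟨B, h.1⟩, h.2⟩ 1 else 0

/-- The differential of `gr_u`:
`d_gr(B₀ | … | B_{m+1}) = Σᵢ (-1)^{i+1} (B₀ | … | BᵢBᵢ₊₁ | … | B_{m+1})`. -/
noncomputable def dgrU (k : Type*) [CommRing k] (n : ℕ) (u : List ℕ) (m : ℕ) :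
    GrU k n u (m + 1) →ₗ[k] GrU k n u m :=
  Finsupp.lift (GrU k n u m) k {b : STuple n (m + 1) // (List.ofFn b.B).flatten = u}
    (fun b => ∑ i : Fin (m + 1),
      ((-1 : ℤ) ^ ((i : ℕ) + 1)) • toGr k n u m (mergeAt b.1.B i))

/-! ### Cutting a list into consecutive segments -/

section Segments

variable {α : Type*} {m : ℕ}

/-- The consecutive segments of the list `u` delimited by the positions `p 0, …, p m`. -/
def segments (u : List α) (p : Fin (m + 1) → ℕ) (i : Fin m) : List α :=
  (u.take (p i.succ)).drop (p i.castSucc)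

/-- The positions in the concatenation of `B` at which the blocks of `B` begin, followed by the
total length. -/
def boundaries (B : Fin m → List α) : Fin (m + 1) → ℕ :=
  Fin.partialSum fun i => (B i).length

lemma drop_take_append_drop_take (u : List α) {a b c : ℕ} (hab : a ≤ b) (hbc : b ≤ c) :
    (u.take b).drop a ++ (u.take c).drop b = (u.take c).drop a := by
  obtain ⟨d, rfl⟩ := Nat.exists_eq_add_of_le hab
  rw [← List.take_append_drop d ((u.take c).drop a), List.drop_drop, List.take_drop,
    List.take_take, min_eq_left hbc]

lemma flatten_segments (u : List α) {p : Fin (m + 1) → ℕ} (hp : Monotone p) :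
    (List.ofFn (segments u p)).flatten = (u.take (p (Fin.last m))).drop (p 0) := by
  induction m with
  | zero => simp
  | succ m ih =>
    have hinit := ih (hp.comp Fin.strictMono_castSucc.monotone)
    rw [List.ofFn_succ', List.concat_eq_append, List.flatten_append, List.flatten_singleton]
    exact (congrArg (· ++ _) hinit).trans
      (drop_take_append_drop_take u (hp (Fin.zero_le _)) (hp (Fin.castSucc_le_succ _)))

lemma flatten_segments_eq_self {u : List α} {p : Fin (m + 1) → ℕ} (hp : Monotone p)
    (hzero : p 0 = 0) (hlast : p (Fin.last m) = u.length) :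
    (List.ofFn (segments u p)).flatten = u := by
  rw [flatten_segments u hp, hzero, hlast, List.drop_zero, List.take_length]

lemma length_segments {u : List α} {p : Fin (m + 1) → ℕ} {i : Fin m} (hi : p i.succ ≤ u.length) :
    (segments u p i).length = p i.succ - p i.castSucc := by
  simp [segments, hi]

lemma boundaries_segments {u : List α} {p : Fin (m + 1) → ℕ} (hp : Monotone p) (hzero : p 0 = 0)
    (hlast : p (Fin.last m) ≤ u.length) : boundaries (segments u p) = p := by
  funext i
  induction i using Fin.induction with
  | zero => rw [boundaries, Fin.partialSum_zero, hzero]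
  | succ i ih =>
    rw [boundaries] at ih ⊢
    rw [Fin.partialSum_succ, ih, length_segments ((hp (Fin.le_last _)).trans hlast),
      Nat.add_sub_cancel' (hp (Fin.castSucc_le_succ i))]

lemma segments_boundaries (B : Fin m → List α) :
    segments (List.ofFn B).flatten (boundaries B) = B := by
  funext i
  simpa [segments, boundaries, Fin.partialSum, List.map_ofFn, Function.comp_def] using
    List.drop_take_succ_flatten_eq_getElem (List.ofFn B) i (by simp)

lemma boundaries_zero (B : Fin m → List α) : boundaries B 0 = 0 :=
  Fin.partialSum_zero _

lemma boundaries_last (B : Fin m → List α) :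
    boundaries B (Fin.last m) = (List.ofFn B).flatten.length := by
  rw [boundaries, Fin.partialSum, Fin.val_last, List.take_of_length_le (by simp),
    List.length_flatten, List.map_ofFn]
  rfl

lemma strictMono_boundaries {B : Fin m → List α} (hB : ∀ i, B i ≠ []) :
    StrictMono (boundaries B) :=
  Fin.strictMono_iff_lt_succ.2 fun i => by
    simpa [boundaries, Fin.partialSum_succ] using List.length_pos_iff.2 (hB i)

end Segments

lemma mergeAt_segments {m : ℕ} (u : List ℕ) {p : Fin (m + 3) → ℕ} (hp : Monotone p)
    (i : Fin (m + 1)) :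
    mergeAt (segments u p) i = segments u (p ∘ i.castSucc.succ.succAbove) := by
  funext l
  simp only [mergeAt, segments, Function.comp_apply, Fin.succ_succAbove_succ]
  rcases lt_trichotomy l i with hlt | rfl | hgt
  · rw [if_neg hlt.ne, if_pos hlt, Fin.succAbove_castSucc_of_lt _ _ hlt,
      Fin.succAbove_succ_of_le _ _ (Fin.castSucc_le_castSucc_iff.2 hlt.le)]
  · rw [if_pos rfl, Fin.succAbove_castSucc_self, Fin.succAbove_succ_self]
    exact drop_take_append_drop_take u (hp (Fin.castSucc_le_succ _))
      (hp (Fin.succ_le_succ_iff.2 (Fin.castSucc_le_succ _)))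
  · rw [if_neg hgt.ne', if_neg hgt.not_gt, Fin.succAbove_castSucc_of_le _ _ hgt.le,
      Fin.succAbove_succ_of_lt _ _ (Fin.castSucc_lt_castSucc_iff.2 hgt)]
    rfl

lemma exists_castSucc_le_lt_succ {α : Type*} [LinearOrder α] {m : ℕ} {p : Fin (m + 1) → α}
    {x : α} (hzero : p 0 ≤ x) (hlast : x < p (Fin.last m)) :
    ∃ j : Fin m, p j.castSucc ≤ x ∧ x < p j.succ := by
  by_contra! h
  exact hlast.not_ge (Fin.induction hzero h (Fin.last m))

section WithEnds

variable {α : Type*} {m : ℕ}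

/-- The sequence `a, c 0, …, c (m - 1), b`. -/
def withEnds (a b : α) (c : Fin m → α) : Fin (m + 2) → α :=
  Fin.cons a (Fin.snoc c b : Fin (m + 1) → α)

lemma withEnds_last (a b : α) (c : Fin m → α) : withEnds a b c (Fin.last (m + 1)) = b := by
  simp [withEnds, ← Fin.succ_last]

lemma withEnds_castSucc_succ (a b : α) (c : Fin m → α) (j : Fin m) :
    withEnds a b c j.castSucc.succ = c j := by
  simp [withEnds]

lemma withEnds_inner (p : Fin (m + 2) → α) :
    withEnds (p 0) (p (Fin.last (m + 1))) (fun j => p j.castSucc.succ) = p := by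
  funext i
  induction i using Fin.cases with
  | zero => rfl
  | succ i =>
    induction i using Fin.lastCases with
    | last => exact withEnds_last _ _ _
    | cast i => exact withEnds_castSucc_succ _ _ _ i

lemma withEnds_comp_succAbove (a b : α) (c : Fin (m + 1) → α) (i : Fin (m + 1)) :
    withEnds a b (c ∘ i.succAbove) = withEnds a b c ∘ i.castSucc.succ.succAbove := by
  rw [← withEnds_inner (withEnds a b c ∘ i.castSucc.succ.succAbove)]
  congr 1
  · simp [withEnds_last]
  · funext j
    simp [withEnds]

lemma strictMono_withEnds [Preorder α] {a b : α} {c : Fin m → α} (hc : StrictMono c)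
    (hab : a < b) (hac : ∀ j, a < c j) (hcb : ∀ j, c j < b) : StrictMono (withEnds a b c) := by
  refine Fin.strictMono_cons.2 ⟨Fin.lastCases (by simpa using hab) (by simpa using hac), ?_⟩
  rw [← Fin.insertNth_last', Fin.strictMono_insertNth_iff]
  exact ⟨hc, fun j _ => hcb j, fun j hj => absurd hj (Fin.castSucc_lt_last j).not_ge⟩

end WithEnds

/-! ### Block boundaries as right-to-left minima -/

/-- Position `i` carries a right-to-left minimum of `u`: its entry is smaller than all later
entries. The default `0` of `getD` is never read when `i < u.length`. -/
def IsRightToLeftMin (u : List ℕ) (i : ℕ) : Prop :=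
  ∀ j, i < j → j < u.length → u.getD i 0 < u.getD j 0

lemma mem_Cuts_iff {n : ℕ} {u : List ℕ} (hu : u.length = n + 1) {i : ℕ} :
    i ∈ Cuts n u ↔ (0 < i ∧ i < n + 1) ∧ IsRightToLeftMin u i := by
  simp [Cuts, IsRightToLeftMin, hu, Nat.succ_le_iff]

namespace IsTuple

variable {n : ℕ} {u : List ℕ}

lemma length_eq (hu : IsTuple n u) : u.length = n + 1 := by
  simpa using hu.1.length_eq

lemma isRightToLeftMin_zero (hu : IsTuple n u) : IsRightToLeftMin u 0 := by
  intro j hj hju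
  have hnodup : u.Nodup := hu.1.nodup_iff.2 List.nodup_range
  have hhead : u.getD 0 0 = 0 := by
    cases u with
    | nil => rfl
    | cons a t => exact hu.2
  have hne : u.getD j 0 ≠ u.getD 0 0 := by
    rw [List.getD_eq_getElem _ _ hju, List.getD_eq_getElem _ _ (hj.trans hju), Ne,
      hnodup.getElem_inj_iff]
    exact hj.ne'
  omega

end IsTuple

section HeadsAndTails

variable {α : Type*} {m : ℕ} {u : List α} {p : Fin (m + 1) → ℕ} {i : Fin m}

lemma segments_eq_cons (d : α) (hlt : p i.castSucc < p i.succ) (hle : p i.succ ≤ u.length) :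
    segments u p i =
      u.getD (p i.castSucc) d :: (u.take (p i.succ)).drop (p i.castSucc + 1) := by
  rw [segments, List.drop_eq_getElem_cons (by simp; omega), List.getElem_take,
    List.getD_eq_getElem _ _ (by omega)]

lemma headI_segments [Inhabited α] (d : α) (hlt : p i.castSucc < p i.succ)
    (hle : p i.succ ≤ u.length) :
    (segments u p i).headI = u.getD (p i.castSucc) d := by
  rw [segments_eq_cons d hlt hle, List.headI_cons]

lemma forall_mem_tail_segments (d : α) (hle : p i.succ ≤ u.length) {P : α → Prop} :
    (∀ x ∈ (segments u p i).tail, P x) ↔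
      ∀ j, p i.castSucc < j → j < p i.succ → P (u.getD j d) := by
  simp only [segments, List.tail_drop, List.forall_mem_iff_getElem, List.getElem_drop,
    List.getElem_take, List.length_drop, List.length_take, min_eq_left hle]
  constructor
  · intro h j hj hji
    obtain ⟨l, rfl⟩ := Nat.exists_eq_add_of_le hj
    rw [List.getD_eq_getElem _ _ (hji.trans_le hle)]
    exact h l (by omega)
  · intro h l hl
    rw [← List.getD_eq_getElem _ d]
    exact h _ (by omega) (by omega)

end HeadsAndTails

lemma forall_block_start_lt_iff {ι α : Type*} [LinearOrder ι] [Preorder α] {m : ℕ}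
    {p : Fin (m + 1) → ι} (hp : StrictMono p) (f : ι → α) :
    ((∀ i j : Fin m, i < j → f (p i.castSucc) < f (p j.castSucc)) ∧
      ∀ (i : Fin m) (x : ι), p i.castSucc < x → x < p i.succ → f (p i.castSucc) < f x) ↔
    ∀ (i : Fin m) (x : ι), p i.castSucc < x → x < p (Fin.last m) → f (p i.castSucc) < f x := by
  constructor
  · rintro ⟨hstarts, hinside⟩ i x hix hx
    obtain ⟨j, hjx, hxj⟩ :=
      exists_castSucc_le_lt_succ ((hp.monotone (Fin.zero_le _)).trans hix.le) hx
    have hij : i ≤ j := Fin.castSucc_lt_succ_iff.1 (hp.lt_iff_lt.1 (hix.trans hxj))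
    rcases hij.eq_or_lt with rfl | hij
    · exact hinside i x hix hxj
    rcases hjx.eq_or_lt with rfl | hjx
    · exact hstarts i j hij
    · exact (hstarts i j hij).trans (hinside j x hjx hxj)
  · intro h
    refine ⟨fun i j hij => h i _ (hp hij) (hp j.castSucc_lt_last), fun i x hix hxi => ?_⟩
    exact h i x hix (hxi.trans_le (hp.monotone (Fin.le_last _)))

lemma isSTuple_segments_iff {n m : ℕ} {u : List ℕ} (hu : u.Perm (List.range (n + 1)))
    {p : Fin (m + 2) → ℕ} (hp : StrictMono p) (hzero : p 0 = 0)
    (hlast : p (Fin.last (m + 1)) = u.length) :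
    IsSTuple n m (segments u p) ↔ ∀ i : Fin (m + 1), IsRightToLeftMin u (p i.castSucc) := by
  have hlt (i : Fin (m + 1)) : p i.castSucc < p i.succ := hp i.castSucc_lt_succ
  have hle (i : Fin (m + 1)) : p i.succ ≤ u.length := hlast ▸ hp.monotone (Fin.le_last _)
  have hne (i : Fin (m + 1)) : segments u p i ≠ [] := by simp [segments_eq_cons 0 (hlt i) (hle i)]
  have hflatten := flatten_segments_eq_self hp.monotone hzero hlast
  have hblocks := forall_block_start_lt_iff hp (u.getD · 0)
  rw [hlast] at hblocks
  simp only [IsSTuple, hne, hflatten, hu, headI_segments 0 (hlt _) (hle _),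
    forall_mem_tail_segments 0 (hle _), ne_eq, not_false_eq_true, implies_true, true_and]
  exact hblocks

section SplitEquiv

variable {n m : ℕ} {u : List ℕ}

/-- The boundaries of the blocks obtained by cutting a list of length `n + 1` at `c`. -/
def cutBoundaries (c : Fin m ↪o {i // i ∈ Cuts n u}) : Fin (m + 2) → ℕ :=
  withEnds 0 (n + 1) fun j => c j

lemma strictMono_cutBoundaries (hu : IsTuple n u) (c : Fin m ↪o {i // i ∈ Cuts n u}) :
    StrictMono (cutBoundaries c) :=
  have hmem (j : Fin m) := ((mem_Cuts_iff hu.length_eq).1 (c j).2).1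
  strictMono_withEnds (fun _ _ h => c.strictMono h) n.succ_pos (fun j => (hmem j).1)
    fun j => (hmem j).2

lemma cutBoundaries_last (hu : IsTuple n u) (c : Fin m ↪o {i // i ∈ Cuts n u}) :
    cutBoundaries c (Fin.last (m + 1)) = u.length := by
  rw [cutBoundaries, withEnds_last, hu.length_eq]

lemma isSTuple_segments_cutBoundaries (hu : IsTuple n u) (c : Fin m ↪o {i // i ∈ Cuts n u}) :
    IsSTuple n m (segments u (cutBoundaries c)) := by
  refine (isSTuple_segments_iff hu.1 (strictMono_cutBoundaries hu c) rfl
    (cutBoundaries_last hu c)).2 (Fin.cases hu.isRightToLeftMin_zero fun j => ?_)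
  rw [← Fin.succ_castSucc, cutBoundaries, withEnds_castSucc_succ]
  exact ((mem_Cuts_iff hu.length_eq).1 (c j).2).2

/-- Cutting `u` along an increasing sequence of `m` admissible cuts. -/
def cutAlong (hu : IsTuple n u) (c : Fin m ↪o {i // i ∈ Cuts n u}) :
    {b : STuple n m // (List.ofFn b.B).flatten = u} :=
  ⟨⟨segments u (cutBoundaries c), isSTuple_segments_cutBoundaries hu c⟩,
    flatten_segments_eq_self (strictMono_cutBoundaries hu c).monotone rfl
      (cutBoundaries_last hu c)⟩

lemma boundaries_mem_Cuts (hu : IsTuple n u) {B : Fin (m + 1) → List ℕ} (hB : IsSTuple n m B)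
    (hflatten : (List.ofFn B).flatten = u) (j : Fin m) :
    boundaries B j.castSucc.succ ∈ Cuts n u := by
  subst hflatten
  have hstrict := strictMono_boundaries hB.1
  have hmin := (isSTuple_segments_iff hu.1 hstrict (boundaries_zero B) (boundaries_last B)).1
    (by rwa [segments_boundaries]) j.succ
  refine (mem_Cuts_iff hu.length_eq).2 ⟨⟨?_, ?_⟩, hmin⟩
  · exact (boundaries_zero B).symm.trans_lt (hstrict (Fin.succ_pos _))
  · exact (hstrict (Fin.succ_lt_succ_iff.2 j.castSucc_lt_last)).trans_eq
      ((boundaries_last B).trans hu.length_eq)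

/-- The increasing sequence of admissible cuts at which a splitting of `u` has been cut. -/
def innerBoundaries (hu : IsTuple n u) (b : {b : STuple n m // (List.ofFn b.B).flatten = u}) :
    Fin m ↪o {i // i ∈ Cuts n u} :=
  OrderEmbedding.ofStrictMono
    (fun j => ⟨boundaries b.1.B j.castSucc.succ, boundaries_mem_Cuts hu b.1.prop b.2 j⟩)
    fun _ _ h => strictMono_boundaries b.1.prop.1 (Fin.succ_lt_succ_iff.2 h)

lemma innerBoundaries_cutAlong (hu : IsTuple n u) (c : Fin m ↪o {i // i ∈ Cuts n u}) :
    innerBoundaries hu (cutAlong hu c) = c := by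
  ext j
  have hboundaries : boundaries (segments u (cutBoundaries c)) = cutBoundaries c :=
    boundaries_segments (strictMono_cutBoundaries hu c).monotone rfl
      (cutBoundaries_last hu c).le
  exact (congrFun hboundaries _).trans (withEnds_castSucc_succ _ _ _ j)

lemma cutBoundaries_innerBoundaries (hu : IsTuple n u)
    (b : {b : STuple n m // (List.ofFn b.B).flatten = u}) :
    cutBoundaries (innerBoundaries hu b) = boundaries b.1.B := by
  have hlast : boundaries b.1.B (Fin.last (m + 1)) = n + 1 := by
    rw [boundaries_last, b.2, hu.length_eq]
  rw [← withEnds_inner (boundaries b.1.B), boundaries_zero, hlast]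
  rfl

lemma cutAlong_innerBoundaries (hu : IsTuple n u)
    (b : {b : STuple n m // (List.ofFn b.B).flatten = u}) :
    cutAlong hu (innerBoundaries hu b) = b := by
  have hsegments : segments u (cutBoundaries (innerBoundaries hu b)) = b.1.B := by
    rw [cutBoundaries_innerBoundaries]
    obtain ⟨b, rfl⟩ := b
    exact segments_boundaries b.B
  exact Subtype.ext ((STuple.mk.injEq ..).mpr hsegments)

/-- The splittings of `u` into `m + 1` blocks correspond to the increasing sequences of `m`
admissible cuts of `u`. -/
def cutEquiv (hu : IsTuple n u) (m : ℕ) :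
    (Fin m ↪o {i // i ∈ Cuts n u}) ≃ {b : STuple n m // (List.ofFn b.B).flatten = u} where
  toFun := cutAlong hu
  invFun := innerBoundaries hu
  left_inv := innerBoundaries_cutAlong hu
  right_inv := cutAlong_innerBoundaries hu

end SplitEquiv

/-! ### Exactness of the augmented simplex -/

lemma finsupp_lift_single_one {R ι M : Type*} [Semiring R] [AddCommMonoid M] [Module R M]
    (f : ι → M) (i : ι) : Finsupp.lift M R ι f (Finsupp.single i 1) = f i := by
  simp

lemma sum_sum_erase_eq_zero_of_antisymm {ι M : Type*} [DecidableEq ι] [AddCommMonoid M]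
    {s : Finset ι} {F : ι → ι → M}
    (hF : ∀ i ∈ s, ∀ j ∈ s, i ≠ j → F i j + F j i = 0) :
    ∑ i ∈ s, ∑ j ∈ s.erase i, F i j = 0 := by
  rw [Finset.sum_sigma']
  refine Finset.sum_involution (fun a _ => ⟨a.2, a.1⟩) ?_ ?_ ?_ fun _ _ => rfl
  · rintro ⟨i, j⟩ hij
    simp only [Finset.mem_sigma, Finset.mem_erase] at hij
    exact hF i hij.1 j hij.2.2 hij.2.1.symm
  · rintro ⟨i, j⟩ hij _ hji
    simp only [Finset.mem_sigma, Finset.mem_erase] at hij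
    exact hij.2.1 (congrArg Sigma.fst hji)
  · rintro ⟨i, j⟩ hij
    simp only [Finset.mem_sigma, Finset.mem_erase] at hij ⊢
    exact ⟨hij.2.2, hij.2.1.symm, hij.1⟩

lemma neg_one_pow_card_filter_lt_erase_antisymm {E : Type*} [LinearOrder E] {s : Finset E}
    {e f : E} (he : e ∈ s) (hf : f ∈ s) (hef : e ≠ f) :
    (-1 : ℤ) ^ (s.filter (· < e)).card * (-1) ^ ((s.erase e).filter (· < f)).card +
      (-1) ^ (s.filter (· < f)).card * (-1) ^ ((s.erase f).filter (· < e)).card = 0 := by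
  wlog hlt : e < f generalizing e f
  · rw [add_comm]
    exact this hf he hef.symm (hef.symm.lt_of_le (not_lt.1 hlt))
  have hcard : ((s.erase e).filter (· < f)).card + 1 = (s.filter (· < f)).card := by
    rw [Finset.filter_erase]
    exact Finset.card_erase_add_one (by simp [he, hlt])
  have hfilter : (s.erase f).filter (· < e) = s.filter (· < e) := by
    rw [Finset.filter_erase, Finset.erase_eq_of_notMem (by simp [hlt.le])]
  rw [hfilter, ← hcard]
  ring

lemma card_filter_lt_map_univ {E : Type*} [Preorder E] [DecidableLT E] {ℓ : ℕ} (c : Fin ℓ ↪o E)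
    (i : Fin ℓ) : ((Finset.univ.map c.toEmbedding).filter (· < c i)).card = i := by
  simp [Finset.filter_map, Finset.filter_gt_eq_Iio]

lemma map_univ_erase {E : Type*} [Preorder E] [DecidableEq E] {ℓ : ℕ} (c : Fin (ℓ + 1) ↪o E)
    (i : Fin (ℓ + 1)) : (Finset.univ.map c.toEmbedding).erase (c i) =
      Finset.univ.map ((Fin.succAboveOrderEmb i).trans c).toEmbedding := by
  have herase : Finset.univ.erase i = Finset.univ.map (Fin.succAboveEmb i) := by
    rw [Fin.univ_succAbove, Finset.erase_cons]
  rw [← RelEmbedding.coe_toEmbedding, ← Finset.map_erase, herase, Finset.map_map]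
  rfl

section Simplex

variable {k : Type*} [CommRing k] {E : Type*} [Fintype E] [LinearOrder E] {ℓ : ℕ}

variable (k) in
/-- The basis element of `C_ℓ(E)` attached to a finite set `s`. Its value when `s` does not have
`ℓ` elements is `0`, which makes the cone on a simplex containing the apex vanish. -/
noncomputable def simplexBasis (ℓ : ℕ) (s : Finset E) : SimplexChain k E ℓ :=
  if h : s.card = ℓ then Finsupp.single ⟨s, h⟩ 1 else 0

lemma simplexBasis_of_card_eq {s : Finset E} (hs : s.card = ℓ) :
    simplexBasis k ℓ s = Finsupp.single ⟨s, hs⟩ 1 :=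
  dif_pos hs

lemma simplexBasis_of_card_ne {s : Finset E} (hs : s.card ≠ ℓ) : simplexBasis k ℓ s = 0 :=
  dif_neg hs

lemma simplexChain_hom_ext {M : Type*} [AddCommMonoid M] [Module k M]
    {f g : SimplexChain k E ℓ →ₗ[k] M}
    (h : ∀ s : Finset E, s.card = ℓ → f (simplexBasis k ℓ s) = g (simplexBasis k ℓ s)) :
    f = g := by
  refine Finsupp.lhom_ext' fun s => LinearMap.ext_ring ?_
  simpa [simplexBasis_of_card_eq s.2] using h s.1 s.2

lemma simplexD_simplexBasis {s : Finset E} (hs : s.card = ℓ + 1) :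
    simplexD k E ℓ (simplexBasis k (ℓ + 1) s) =
      ∑ e ∈ s, (-1 : ℤ) ^ (s.filter (· < e)).card • simplexBasis k ℓ (s.erase e) := by
  rw [simplexBasis_of_card_eq hs, simplexD, finsupp_lift_single_one,
    ← Finset.sum_attach s]
  refine Finset.sum_congr rfl fun e _ => ?_
  rw [simplexBasis_of_card_eq]

lemma simplexD_comp_simplexD (ℓ : ℕ) : simplexD k E ℓ ∘ₗ simplexD k E (ℓ + 1) = 0 := by
  refine simplexChain_hom_ext fun s hs => ?_
  have hfaces : ∀ e ∈ s, simplexD k E ℓ (simplexBasis k (ℓ + 1) (s.erase e)) =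
      ∑ f ∈ s.erase e, (-1 : ℤ) ^ ((s.erase e).filter (· < f)).card •
        simplexBasis k ℓ ((s.erase e).erase f) := fun e he =>
    simplexD_simplexBasis (by rw [Finset.card_erase_of_mem he, hs, Nat.add_sub_cancel])
  rw [LinearMap.comp_apply, simplexD_simplexBasis hs, map_sum, LinearMap.zero_apply,
    ← sum_sum_erase_eq_zero_of_antisymm (s := s)]
  · refine Finset.sum_congr rfl fun e he => ?_
    rw [map_zsmul, hfaces e he, Finset.smul_sum]
  · intro e he f hf hef
    rw [smul_smul, smul_smul, Finset.erase_right_comm, ← add_smul,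
      neg_one_pow_card_filter_lt_erase_antisymm he hf hef, zero_smul]

section Cone

variable [OrderBot E]

variable (k E) in
/-- The cone with apex `⊥`, sending `s` to `{⊥} ∪ s` if `⊥ ∉ s` and to `0` otherwise. -/
noncomputable def simplexCone (ℓ : ℕ) : SimplexChain k E ℓ →ₗ[k] SimplexChain k E (ℓ + 1) :=
  Finsupp.lift (SimplexChain k E (ℓ + 1)) k {s : Finset E // s.card = ℓ}
    fun s => simplexBasis k (ℓ + 1) (insert ⊥ s.1)

lemma simplexCone_simplexBasis {s : Finset E} (hs : s.card = ℓ) :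
    simplexCone k E ℓ (simplexBasis k ℓ s) = simplexBasis k (ℓ + 1) (insert ⊥ s) := by
  rw [simplexBasis_of_card_eq hs, simplexCone, finsupp_lift_single_one]

lemma simplexCone_simplexBasis_of_bot_mem {s : Finset E} (hs : s.card = ℓ) (hbot : ⊥ ∈ s) :
    simplexCone k E ℓ (simplexBasis k ℓ s) = 0 := by
  rw [simplexCone_simplexBasis hs, Finset.insert_eq_of_mem hbot, simplexBasis_of_card_ne (by omega)]

lemma simplexD_simplexBasis_insert_bot {s : Finset E} (hs : s.card = ℓ) (hbot : ⊥ ∉ s) :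
    simplexD k E ℓ (simplexBasis k (ℓ + 1) (insert ⊥ s)) = simplexBasis k ℓ s -
      ∑ e ∈ s, (-1 : ℤ) ^ (s.filter (· < e)).card • simplexBasis k ℓ (insert ⊥ (s.erase e)) := by
  rw [simplexD_simplexBasis (by rw [Finset.card_insert_of_notMem hbot, hs]),
    Finset.sum_insert hbot, Finset.erase_insert hbot, sub_eq_add_neg, ← Finset.sum_neg_distrib]
  congr 1
  · simp
  · refine Finset.sum_congr rfl fun e he => ?_
    have hne : ⊥ ≠ e := fun h => hbot (h ▸ he)
    rw [Finset.erase_insert_of_ne hne, Finset.filter_insert, if_pos (bot_lt_iff_ne_bot.2 hne.symm),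
      Finset.card_insert_of_notMem (by simp [hbot]), pow_succ, mul_neg_one, neg_smul]

lemma simplexD_comp_simplexCone_zero : simplexD k E 0 ∘ₗ simplexCone k E 0 = LinearMap.id := by
  refine simplexChain_hom_ext fun s hs => ?_
  obtain rfl := Finset.card_eq_zero.1 hs
  rw [LinearMap.comp_apply, simplexCone_simplexBasis hs,
    simplexD_simplexBasis_insert_bot hs (Finset.notMem_empty ⊥), Finset.sum_empty, sub_zero,
    LinearMap.id_apply]

lemma simplexCone_simplexD_simplexBasis {s : Finset E} (hs : s.card = ℓ + 1) :
    simplexCone k E ℓ (simplexD k E ℓ (simplexBasis k (ℓ + 1) s)) =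
      ∑ e ∈ s, (-1 : ℤ) ^ (s.filter (· < e)).card •
        simplexBasis k (ℓ + 1) (insert ⊥ (s.erase e)) := by
  rw [simplexD_simplexBasis hs, map_sum]
  refine Finset.sum_congr rfl fun e he => ?_
  rw [map_zsmul, simplexCone_simplexBasis]
  rw [Finset.card_erase_of_mem he, hs, Nat.add_sub_cancel]

lemma simplexCone_simplexD_simplexBasis_of_bot_mem {s : Finset E} (hs : s.card = ℓ + 1)
    (hbot : ⊥ ∈ s) :
    simplexCone k E ℓ (simplexD k E ℓ (simplexBasis k (ℓ + 1) s)) =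
      simplexBasis k (ℓ + 1) s := by
  rw [simplexCone_simplexD_simplexBasis hs, Finset.sum_eq_single_of_mem ⊥ hbot]
  · rw [Finset.insert_erase hbot, Finset.filter_false_of_mem fun _ _ => not_lt_bot,
      Finset.card_empty, pow_zero, one_smul]
  · intro e he hne
    have hcard : (insert ⊥ (s.erase e)).card ≠ ℓ + 1 := by
      rw [Finset.insert_eq_of_mem (Finset.mem_erase.2 ⟨hne.symm, hbot⟩),
        Finset.card_erase_of_mem he]
      omega
    rw [simplexBasis_of_card_ne hcard, smul_zero]

lemma simplexCone_homotopy (ℓ : ℕ) :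
    simplexD k E (ℓ + 1) ∘ₗ simplexCone k E (ℓ + 1) + simplexCone k E ℓ ∘ₗ simplexD k E ℓ =
      LinearMap.id := by
  refine simplexChain_hom_ext fun s hs => ?_
  rw [LinearMap.add_apply, LinearMap.comp_apply, LinearMap.comp_apply, LinearMap.id_apply]
  by_cases hbot : ⊥ ∈ s
  · rw [simplexCone_simplexBasis_of_bot_mem hs hbot, map_zero, zero_add,
      simplexCone_simplexD_simplexBasis_of_bot_mem hs hbot]
  · rw [simplexCone_simplexBasis hs, simplexD_simplexBasis_insert_bot hs hbot,
      simplexCone_simplexD_simplexBasis hs, sub_add_cancel]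

end Cone

lemma simplexD_zero_surjective [Nonempty E] : Function.Surjective (simplexD k E 0) := by
  let _ : OrderBot E := Fintype.toOrderBot E
  exact fun x => ⟨_, LinearMap.congr_fun simplexD_comp_simplexCone_zero x⟩

lemma simplexD_exact [Nonempty E] (ℓ : ℕ) :
    Function.Exact (simplexD k E (ℓ + 1)) (simplexD k E ℓ) := by
  let _ : OrderBot E := Fintype.toOrderBot E
  refine Function.Exact.of_comp_of_mem_range
    (congrArg DFunLike.coe (simplexD_comp_simplexD ℓ)) fun x hx => ⟨simplexCone k E (ℓ + 1) x, ?_⟩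
  simpa [hx] using LinearMap.congr_fun (simplexCone_homotopy (k := k) (E := E) ℓ) x

variable (E) in
/-- The `ℓ`-element subsets of `E` correspond to the increasing sequences of length `ℓ` in `E`. -/
def simplexEquiv (ℓ : ℕ) : (Fin ℓ ↪o E) ≃ {s : Finset E // s.card = ℓ} :=
  Set.powersetCard.ofFinEmbEquiv

lemma single_simplexEquiv (c : Fin ℓ ↪o E) :
    (Finsupp.single (simplexEquiv E ℓ c) 1 : SimplexChain k E ℓ) =
      simplexBasis k ℓ (Finset.univ.map c.toEmbedding) :=
  (simplexBasis_of_card_eq _).symm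

lemma simplexD_simplexBasis_map_univ (c : Fin (ℓ + 1) ↪o E) :
    simplexD k E ℓ (simplexBasis k (ℓ + 1) (Finset.univ.map c.toEmbedding)) =
      ∑ i : Fin (ℓ + 1), (-1 : ℤ) ^ (i : ℕ) •
        simplexBasis k ℓ (Finset.univ.map ((Fin.succAboveOrderEmb i).trans c).toEmbedding) := by
  rw [simplexD_simplexBasis (by simp), Finset.sum_map]
  refine Finset.sum_congr rfl fun i _ => ?_
  rw [RelEmbedding.coe_toEmbedding, card_filter_lt_map_univ, map_univ_erase]

end Simplex

/-! ### Comparison of the differentials -/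

section Comparison

variable {k : Type*} [CommRing k] {n m : ℕ} {u : List ℕ}

lemma mergeAt_cutAlong (hu : IsTuple n u) (c : Fin (m + 1) ↪o {i // i ∈ Cuts n u})
    (i : Fin (m + 1)) :
    mergeAt (cutAlong hu c).1.B i = (cutAlong hu ((Fin.succAboveOrderEmb i).trans c)).1.B :=
  (mergeAt_segments u (strictMono_cutBoundaries hu c).monotone i).trans
    (congrArg (segments u) (withEnds_comp_succAbove 0 (n + 1) (fun j => (c j : ℕ)) i).symm)

lemma dgrU_single_cutAlong (hu : IsTuple n u) (c : Fin (m + 1) ↪o {i // i ∈ Cuts n u}) :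
    dgrU k n u m (Finsupp.single (cutAlong hu c) 1) =
      ∑ i : Fin (m + 1), (-1 : ℤ) ^ ((i : ℕ) + 1) •
        Finsupp.single (cutAlong hu ((Fin.succAboveOrderEmb i).trans c)) 1 := by
  rw [dgrU, finsupp_lift_single_one]
  refine Finset.sum_congr rfl fun i _ => ?_
  rw [mergeAt_cutAlong, toGr, dif_pos ⟨STuple.prop _, (cutAlong hu _).2⟩]

variable (k) in
/-- The isomorphism `gr_u ≃ C_*(Cuts(u))` in degree `m`. It sends a splitting to the set of its
cuts, with the sign `(-1) ^ m` that makes up for the exponents `i + 1` in `dgrU` and `i` in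
`simplexD`. -/
noncomputable def grIso (hu : IsTuple n u) (m : ℕ) :
    GrU k n u m ≃ₗ[k] SimplexChain k {i // i ∈ Cuts n u} m :=
  Finsupp.domLCongr ((cutEquiv hu m).symm.trans (simplexEquiv _ m)) ≪≫ₗ
    DistribMulAction.toLinearEquiv k _ ((-1 : ℤˣ) ^ m)

lemma grIso_single_cutAlong (hu : IsTuple n u) (c : Fin m ↪o {i // i ∈ Cuts n u}) :
    grIso k hu m (Finsupp.single (cutAlong hu c) 1) =
      (-1 : ℤ) ^ m • simplexBasis k m (Finset.univ.map c.toEmbedding) := by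
  have hequiv : (cutEquiv hu m).symm (cutAlong hu c) = c := (cutEquiv hu m).symm_apply_apply c
  rw [grIso, LinearEquiv.trans_apply, Finsupp.domLCongr_single, Equiv.trans_apply, hequiv,
    single_simplexEquiv, DistribMulAction.toLinearEquiv_apply, Units.smul_def,
    Units.val_pow_eq_pow_val, Units.val_neg, Units.val_one]

lemma simplexD_comp_grIso (hu : IsTuple n u) (m : ℕ) :
    simplexD k {i // i ∈ Cuts n u} m ∘ₗ (grIso k hu (m + 1)).toLinearMap =
      (grIso k hu m).toLinearMap ∘ₗ dgrU k n u m := by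
  refine Finsupp.lhom_ext' fun b => LinearMap.ext_ring ?_
  obtain ⟨c, rfl⟩ := (cutEquiv hu (m + 1)).surjective b
  change simplexD k _ m (grIso k hu (m + 1) (Finsupp.single (cutAlong hu c) 1)) =
    grIso k hu m (dgrU k n u m (Finsupp.single (cutAlong hu c) 1))
  simp only [grIso_single_cutAlong, dgrU_single_cutAlong, map_zsmul, map_sum,
    simplexD_simplexBasis_map_univ, Finset.smul_sum, smul_smul]
  refine Finset.sum_congr rfl fun i _ => ?_
  congr 1
  ring

end Comparison

/-- Lemma 4.33/4.34 of Hoffbeck–Vespa: for `n ≥ 1` and `u ∈ Tuple(n)`, the complex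
`gr_u` is isomorphic as a chain complex to `C_*(Cuts(u))`, and in particular `gr_u` is
exact: its homology vanishes in every degree. -/
theorem grU_iso_simplexChain_and_exact (k : Type*) [CommRing k] (n : ℕ) (hn : 1 ≤ n)
    (u : List ℕ) (hu : IsTuple n u) :
    (∃ e : ∀ m : ℕ, GrU k n u m ≃ₗ[k] SimplexChain k {i // i ∈ Cuts n u} m,
      ∀ m : ℕ, (simplexD k {i // i ∈ Cuts n u} m).comp (e (m + 1)).toLinearMap =
        (e m).toLinearMap.comp (dgrU k n u m)) ∧
    (LinearMap.range (dgrU k n u 0) = ⊤ ∧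
      ∀ m : ℕ, LinearMap.ker (dgrU k n u m) = LinearMap.range (dgrU k n u (m + 1))) := by
  have : Nonempty {i // i ∈ Cuts n u} := ⟨⟨n, by simp [Cuts, hn]⟩⟩
  have hcomm := simplexD_comp_grIso (k := k) hu
  refine ⟨⟨grIso k hu, hcomm⟩, LinearMap.range_eq_top.2 ?_, fun m => LinearMap.exact_iff.1 ?_⟩
  · have hcomp : grIso k hu 0 ∘ dgrU k n u 0 = simplexD k _ 0 ∘ grIso k hu 1 :=
      congrArg DFunLike.coe (hcomm 0).symm
    rw [← EquivLike.comp_surjective _ (grIso k hu 0), hcomp]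
    exact simplexD_zero_surjective.comp (grIso k hu 1).surjective
  · exact (Function.Exact.iff_of_ladder_linearEquiv (hcomm (m + 1)) (hcomm m)).1 (simplexD_exact m)
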